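/- (Sufficient stability condition (stab_cond).) Let H be a real inner product space, G : H → H any map, and χ ≥ 0 a real number such that χ·‖G u‖² ≤ ⟪G u, u⟫ for all u ∈ H. Then for all u, v ∈ H: χ·⟪G u, v⟫ ≥ (χ/2)·⟪G u, u⟫ − (1/2)·‖u − v‖². -/

import Mathlib

open RealInnerProductSpace

section SemiInner

open RCLike

variable {𝕜 E : Type*} [RCLike 𝕜] [SeminormedAddCommGroup E] [InnerProductSpace 𝕜 E]

theorem two_mul_re_inner_le_norm_sq_add_norm_sq (x y : E) :
    2 * re (inner 𝕜 x y) ≤ ‖x‖ ^ 2 + ‖y‖ ^ 2 := by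
  have h := norm_sub_sq (𝕜 := 𝕜) x y
  linarith [sq_nonneg ‖x - y‖]

theorem two_mul_mul_re_inner_le_sq_mul_norm_sq_add_norm_sq (c : ℝ) (x y : E) :
    2 * (c * re (inner 𝕜 x y)) ≤ c ^ 2 * ‖x‖ ^ 2 + ‖y‖ ^ 2 := by
  simpa only [inner_smul_real_left, smul_re, norm_smul, norm_ofReal, mul_pow, sq_abs]
    using two_mul_re_inner_le_norm_sq_add_norm_sq (𝕜 := 𝕜) ((c : 𝕜) • x) y

theorem stability_condition_general_general {χ : ℝ} (hχ : 0 ≤ χ) {g u : E}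
    (hg : χ * ‖g‖ ^ 2 ≤ re (inner 𝕜 g u)) (v : E) :
    χ / 2 * re (inner 𝕜 g u) - 1 / 2 * ‖u - v‖ ^ 2 ≤ χ * re (inner 𝕜 g v) := by
  have cross_term : χ * re (inner 𝕜 g u) - χ * re (inner 𝕜 g v) ≤
      χ / 2 * re (inner 𝕜 g u) + 1 / 2 * ‖u - v‖ ^ 2 :=
    calc χ * re (inner 𝕜 g u) - χ * re (inner 𝕜 g v)
        = χ * re (inner 𝕜 g (u - v)) := by rw [inner_sub_right, map_sub, mul_sub]
      _ ≤ χ / 2 * (χ * ‖g‖ ^ 2) + 1 / 2 * ‖u - v‖ ^ 2 := by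
        linarith [two_mul_mul_re_inner_le_sq_mul_norm_sq_add_norm_sq (𝕜 := 𝕜) χ g (u - v)]
      _ ≤ χ / 2 * re (inner 𝕜 g u) + 1 / 2 * ‖u - v‖ ^ 2 := by gcongr
  linarith

end SemiInner

theorem stability_condition_general
    {H : Type*} [NormedAddCommGroup H] [InnerProductSpace ℝ H]
    (G : H → H)
    (χ : ℝ) (hχ : 0 ≤ χ)
    (hstab : ∀ u : H, χ * ‖G u‖ ^ 2 ≤ ⟪G u, u⟫) :
    ∀ u v : H,
      χ * ⟪G u, v⟫ ≥ (χ / 2) * ⟪G u, u⟫ - (1 / 2) * ‖u - v‖ ^ 2 :=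
  fun u v => stability_condition_general_general (𝕜 := ℝ) hχ (hstab u) v
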